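/- Let β = r/s be a rational number with r > s > 0 and gcd(r, s) = 1, and let F, G ∈ ℝ[X, Y] be β-quasihomogeneous polynomials of degree d ≥ 1, neither of which is a scalar multiple of X^d, with height functions f₊, f₋ and g₊, g₋. Suppose there exist nonzero real numbers λ₁, λ₂ with λ₁λ₂ > 0 and bi-Lipschitz homeomorphisms φ₁, φ₂ : ℝ → ℝ such that: if λ₁ > 0 and λ₂ > 0 then |λ₁|^d·(g₊ ∘ φ₁) = f₊ and |λ₂|^d·(g₋ ∘ φ₂) = f₋, while if λ₁ < 0 and λ₂ < 0 then |λ₁|^d·(g₋ ∘ φ₁) = f₊ and |λ₂|^d·(g₊ ∘ φ₂) = f₋. If at least one of the following conditions holds: (a) r is even or s is odd, (b) λ₁ = λ₂, (c) X divides neither F nor G in ℝ[X, Y]; then there exist a neighborhood U of the origin in ℝ² and an injective map Φ : U → ℝ² with Φ(0) = 0 that is bi-Lipschitz onto its image and satisfies G(Φ(x, y)) = F(x, y) for all (x, y) ∈ U. -/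

import Mathlib

open Filter Topology

/-- Evaluation of a polynomial in two variables at the point `(x, y)`. -/
noncomputable def eval2 (F : MvPolynomial (Fin 2) ℝ) (x y : ℝ) : ℝ :=
  MvPolynomial.eval ![x, y] F

/-- `F` and `G` are (ℛ-)Lipschitz equivalent near the origin: there is a neighborhood
`U` of `0 ∈ ℝ²` and an injective map `Φ : U → ℝ²` fixing the origin, bi-Lipschitz onto
its image, with `G ∘ Φ = F` on `U`. -/
def LocalLipEquiv (F G : ℝ × ℝ → ℝ) : Prop :=
  ∃ U ∈ nhds (0 : ℝ × ℝ), ∃ Φ : ℝ × ℝ → ℝ × ℝ,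
    Set.InjOn Φ U ∧ Φ 0 = 0 ∧ (∃ K : NNReal, LipschitzOnWith K Φ U) ∧
    (∃ A : ℝ, 0 < A ∧ ∀ p ∈ U, ∀ q ∈ U, A * dist p q ≤ dist (Φ p) (Φ q)) ∧
    ∀ p ∈ U, G (Φ p) = F p

/-!
On each half-plane `±x > 0` the map `Φ` can be taken quasihomogeneous: with `ψᵢ = |λᵢ|^β φᵢ` it
sends `(x, y)` to `(λᵢ x, |x|^β ψᵢ(y / |x|^β))`, and the height relations say exactly that
`G ∘ Φ = F` there. In the variable `u = |x|^β` the second coordinate is the `1`-homogeneous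
extension of `ψᵢ`, which is bi-Lipschitz up to the line `u = 0` once `ψᵢ` has a slope `Lᵢ ≠ 0` at
infinity and `w ↦ w ψᵢ(1 / w)` is Lipschitz near `0`. Both follow from the relation
`p ∘ ψᵢ = q` between nonconstant polynomials: comparing leading terms gives the slope, and the
implicit function theorem applied to the homogenizations of `p` and `q` at infinity gives the
Lipschitz bound.

The two halves fit together along `x = 0` as soon as `L₁ = L₂`. The substitution
`t = -1` in `F(t^s x, t^r y) = t^(sd) F(x, y)` takes care of the signs. For odd `s` it transports
`ψ₁` to the other half-plane, so the halves match by construction. For even `s` the leading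
coefficients give `|L₁| = |L₂|` when `|λ₁| = |λ₂|` or `X ∤ G`, and since `G` is then even in
`y`, `ψ₂` may be replaced by `-ψ₂`.
-/

section Bilipschitz

open Asymptotics Bornology

/-- A map is bi-Lipschitz if it distorts distances at most by a constant factor in either
direction. -/
def IsBilipschitz {α β : Type*} [PseudoEMetricSpace α] [PseudoEMetricSpace β] (f : α → β) : Prop :=
  (∃ K, LipschitzWith K f) ∧ ∃ K, AntilipschitzWith K f

theorem isBilipschitz_of_bijective {α β : Type*} [EMetricSpace α] [Nonempty α]
    [PseudoEMetricSpace β] {f : α → β} (hf : Function.Bijective f) (hlip : ∃ K, LipschitzWith K f)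
    (hinv : ∃ K, LipschitzWith K (Function.invFun f)) : IsBilipschitz f := by
  obtain ⟨K, hK⟩ := hinv
  exact ⟨hlip, K, hK.to_rightInverse (Function.leftInverse_invFun hf.1)⟩

variable {E : Type*} [NormedAddCommGroup E]

theorem IsBilipschitz.isTheta_id {φ : E → E} (hφ : IsBilipschitz φ) : φ =Θ[cobounded E] id := by
  obtain ⟨⟨K, hK⟩, K', hK'⟩ := hφ
  have hsub : (fun t => φ t - φ 0) =Θ[cobounded E] id := by
    refine ⟨.of_bound K (.of_forall fun t => ?_), .of_bound K' (.of_forall fun t => ?_)⟩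
    · simpa [dist_eq_norm] using hK.dist_le_mul t 0
    · simpa [dist_eq_norm] using hK'.le_mul_dist t 0
  have hconst : (fun _ => φ 0) =o[cobounded E] id := isLittleO_const_id_cobounded _
  refine EventuallyEq.trans_isTheta (.of_forall fun t => ?_) (hsub.add_isLittleO hconst)
  exact (sub_add_cancel _ _).symm

theorem isBilipschitz_const_smul {𝕜 : Type*} [NormedField 𝕜] [NormedSpace 𝕜 E] {c : 𝕜}
    (hc : c ≠ 0) : IsBilipschitz (c • · : E → E) :=
  ⟨⟨_, lipschitzWith_smul c⟩, _, (lipschitzWith_smul c⁻¹).to_rightInverse (inv_smul_smul₀ hc)⟩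

theorem IsBilipschitz.comp {α β γ : Type*} [PseudoEMetricSpace α] [PseudoEMetricSpace β]
    [PseudoEMetricSpace γ] {g : β → γ} {f : α → β} (hg : IsBilipschitz g) (hf : IsBilipschitz f) :
    IsBilipschitz (g ∘ f) := by
  obtain ⟨⟨_, hg⟩, _, hg'⟩ := hg
  obtain ⟨⟨_, hf⟩, _, hf'⟩ := hf
  exact ⟨⟨_, hg.comp hf⟩, _, hg'.comp hf'⟩

end Bilipschitz

section Asymptotics

open Polynomial Asymptotics Bornology

theorem exists_tendsto_of_tendsto_pow {ι : Type*} {l : Filter ι} {f : ι → ℝ} {n : ℕ} {a : ℝ}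
    (hn : n ≠ 0) (hsign : (∀ᶠ i in l, 0 ≤ f i) ∨ ∀ᶠ i in l, f i ≤ 0)
    (hf : Tendsto (fun i => f i ^ n) l (𝓝 a)) : ∃ L, Tendsto f l (𝓝 L) := by
  have habs : Tendsto (fun i => |f i|) l (𝓝 (|a| ^ (n⁻¹ : ℝ))) := by
    refine (hf.abs.rpow_const (p := (n⁻¹ : ℝ)) (.inr (by positivity))).congr fun i => ?_
    rw [abs_pow, Real.pow_rpow_inv_natCast (abs_nonneg _) hn]
  rcases hsign with hsign | hsign
  · exact ⟨_, habs.congr' (hsign.mono fun i => abs_of_nonneg)⟩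
  · exact ⟨_, habs.neg.congr' (hsign.mono fun i hi => by rw [abs_of_nonpos hi, neg_neg])⟩

theorem slope_nonneg_or_nonpos {φ : ℝ → ℝ} (hcont : Continuous φ) (hinj : Function.Injective φ)
    (a : ℝ) : (∀ t, 0 ≤ slope φ a t) ∨ ∀ t, slope φ a t ≤ 0 := by
  rcases hcont.strictMono_of_inj hinj with h | h
  · exact .inl fun t => (h.monotone.monotoneOn Set.univ).slope_nonneg trivial trivial
  · exact .inr fun t => (h.antitone.antitoneOn Set.univ).slope_nonpos trivial trivial

variable {p q : ℝ[X]} {φ : ℝ → ℝ}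

theorem polynomial_isTheta_pow (hp : p ≠ 0) :
    (fun t => p.eval t) =Θ[cobounded ℝ] fun t => t ^ p.natDegree :=
  p.isEquivalent_cobounded_leading_monomial.isTheta.trans <|
    (isTheta_const_mul_left (leadingCoeff_ne_zero.2 hp)).2 (isTheta_refl _ _)

theorem le_of_pow_isBigO_pow {m n : ℕ}
    (h : (fun t : ℝ => t ^ m) =O[cobounded ℝ] fun t => t ^ n) : m ≤ n := by
  by_contra! hlt
  refine isLittleO_irrefl ?_ (h.trans_isLittleO (isLittleO_pow_pow_cobounded_of_lt hlt))
  exact ((eventually_ne_cobounded 0).mono fun t ht => pow_ne_zero m ht).frequently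

theorem natDegree_eq_of_eval_comp (hp : p ≠ 0) (hφ : IsBilipschitz φ)
    (h : ∀ t, p.eval (φ t) = q.eval t) : p.natDegree = q.natDegree := by
  obtain ⟨K, hK⟩ := hφ.2
  have hq : q ≠ 0 := by
    rintro rfl
    exact hp <| p.eq_zero_of_infinite_isRoot <|
      Set.infinite_of_injective_forall_mem hK.injective fun t => by simp [h]
  have hcomp : (fun t => q.eval t) =Θ[cobounded ℝ] fun t => φ t ^ p.natDegree := by
    obtain ⟨hO, hΩ⟩ := polynomial_isTheta_pow hp
    simp only [← h]
    exact ⟨hO.comp_tendsto hK.tendsto_cobounded, hΩ.comp_tendsto hK.tendsto_cobounded⟩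
  have hpow : (fun t : ℝ => t ^ p.natDegree) =Θ[cobounded ℝ] fun t => t ^ q.natDegree :=
    (hcomp.trans (hφ.isTheta_id.pow _)).symm.trans (polynomial_isTheta_pow hq)
  exact (le_of_pow_isBigO_pow hpow.1).antisymm (le_of_pow_isBigO_pow hpow.2)

theorem tendsto_div_pow_of_eval_comp (hp : p ≠ 0) (hφ : IsBilipschitz φ)
    (h : ∀ t, p.eval (φ t) = q.eval t) :
    Tendsto (fun t => p.leadingCoeff * (φ t / t) ^ p.natDegree) (cobounded ℝ)
      (𝓝 q.leadingCoeff) := by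
  obtain ⟨K, hK⟩ := hφ.2
  have hpφ : (fun t => q.eval t) ~[cobounded ℝ] fun t => p.leadingCoeff * φ t ^ p.natDegree := by
    simp only [← h]
    exact p.isEquivalent_cobounded_leading_monomial.comp_tendsto hK.tendsto_cobounded
  have hquot := (hpφ.symm.trans q.isEquivalent_cobounded_leading_monomial).div
    (IsEquivalent.refl (u := fun t : ℝ => t ^ p.natDegree))
  refine (hquot.symm.tendsto_nhds ?_).congr fun t => by
    simp only [Pi.div_apply, div_pow, mul_div_assoc]
  refine tendsto_const_nhds.congr' ?_
  filter_upwards [eventually_ne_cobounded (0 : ℝ)] with t ht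
  rw [← natDegree_eq_of_eval_comp hp hφ h]
  exact (mul_div_cancel_right₀ _ (pow_ne_zero _ ht)).symm

theorem IsBilipschitz.isEquivalent_slope_zero (hφ : IsBilipschitz φ) :
    slope φ 0 ~[cobounded ℝ] fun t => φ t / t := by
  have hsub : (fun t => φ t - φ 0) ~[cobounded ℝ] φ := by
    refine IsEquivalent.refl.sub_isLittleO ?_
    exact (isLittleO_const_id_cobounded (φ 0)).trans_isTheta hφ.isTheta_id.symm
  refine (hsub.div (IsEquivalent.refl (u := id))).congr_left (.of_forall fun t => ?_)
  simp [slope_def_field]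

theorem exists_tendsto_div_of_eval_comp (hp : p.natDegree ≠ 0) (hφ : IsBilipschitz φ)
    (h : ∀ t, p.eval (φ t) = q.eval t) :
    ∃ L, p.leadingCoeff * L ^ p.natDegree = q.leadingCoeff ∧
      Tendsto (fun t => φ t / t) (cobounded ℝ) (𝓝 L) := by
  have hp0 : p ≠ 0 := by rintro rfl; simp at hp
  have hpow := tendsto_div_pow_of_eval_comp hp0 hφ h
  have hslope : Tendsto (fun t => slope φ 0 t ^ p.natDegree) (cobounded ℝ)
      (𝓝 (p.leadingCoeff⁻¹ * q.leadingCoeff)) := by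
    refine (hφ.isEquivalent_slope_zero.pow _).symm.tendsto_nhds ?_
    refine (hpow.const_mul p.leadingCoeff⁻¹).congr fun t => ?_
    exact inv_mul_cancel_left₀ (leadingCoeff_ne_zero.2 hp0) _
  obtain ⟨⟨_, hlip⟩, _, hanti⟩ := id hφ
  obtain ⟨L, hL⟩ := exists_tendsto_of_tendsto_pow hp
    ((slope_nonneg_or_nonpos hlip.continuous hanti.injective 0).imp .of_forall .of_forall) hslope
  have hL' := hφ.isEquivalent_slope_zero.tendsto_nhds hL
  exact ⟨L, tendsto_nhds_unique ((hL'.pow _).const_mul _) hpow, hL'⟩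

end Asymptotics

section Inversion

open Polynomial Bornology

theorem exists_lipschitzOnWith_of_implicit {E F G : Type*}
    [NormedAddCommGroup E] [NormedSpace ℝ E] [CompleteSpace E]
    [NormedAddCommGroup F] [NormedSpace ℝ F] [CompleteSpace F]
    [NormedAddCommGroup G] [NormedSpace ℝ G] [CompleteSpace G]
    {f : E × F → G} {k : E → F} {a : E} (hf : ContDiffAt ℝ 1 f (a, k a))
    (hf' : (fderiv ℝ f (a, k a) ∘L .inr ℝ E F).IsInvertible)
    (hk : ContinuousAt k a) (hfk : ∀ᶠ x in 𝓝 a, f (x, k x) = f (a, k a)) :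
    ∃ K, ∃ s ∈ 𝓝 a, LipschitzOnWith K k s := by
  have hkf : k =ᶠ[𝓝 a] hf.implicitFunction one_ne_zero hf' := by
    have hgraph : ContinuousAt (fun x => (x, k x)) a := continuousAt_id.prodMk hk
    filter_upwards [hfk,
      hgraph.eventually (hf.eventually_apply_eq_iff_implicitFunction one_ne_zero hf')]
      with x hx hiff using (hiff.1 hx).symm
  exact ((hf.contDiffAt_implicitFunction one_ne_zero hf').congr_of_eventuallyEq
    hkf).exists_lipschitzOnWith

theorem isInvertible_fderiv_comp_inr {f : ℝ × ℝ → ℝ} {a b c : ℝ} (hf : DifferentiableAt ℝ f (a, b))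
    (hc : HasDerivAt (fun y => f (a, y)) c b) (hc0 : c ≠ 0) :
    (fderiv ℝ f (a, b) ∘L .inr ℝ ℝ ℝ).IsInvertible := by
  refine ⟨ContinuousLinearEquiv.unitsEquivAut ℝ (Units.mk0 c hc0), ?_⟩
  rw [(hf.hasFDerivAt.comp b (hasFDerivAt_prodMk_right a b)).unique hc.hasFDerivAt]
  ext
  simp

/-- The map `φ` read in the chart `w = t⁻¹` at infinity, i.e. `w ↦ w * φ w⁻¹`, with prescribed value
`L` at `w = 0`. -/
noncomputable def inversion (φ : ℝ → ℝ) (L : ℝ) : ℝ → ℝ :=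
  Function.update (fun w => w * φ w⁻¹) 0 L

variable {φ : ℝ → ℝ} {L : ℝ}

@[simp] theorem inversion_zero : inversion φ L 0 = L := Function.update_self ..

theorem inversion_of_ne_zero {w : ℝ} (hw : w ≠ 0) : inversion φ L w = w * φ w⁻¹ :=
  Function.update_of_ne hw ..

theorem continuousAt_inversion (h : Tendsto (fun t => φ t / t) (cobounded ℝ) (𝓝 L)) :
    ContinuousAt (inversion φ L) 0 := by
  refine continuousAt_update_same.2 ?_
  simpa only [Function.comp_def, div_inv_eq_mul, mul_comm] using
    h.comp (Filter.tendsto_inv₀_nhdsNE_zero)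

theorem eval_homogenize_zero {R : Type*} [CommSemiring R] (p : R[X]) (n : ℕ) (x : R) :
    (p.homogenize n).eval ![x, 0] = p.coeff n * x ^ n := by
  rw [homogenize, map_sum, Finset.sum_eq_single (n, 0)]
  · simp [MvPolynomial.eval_monomial]
  · rintro ⟨i, j⟩ hij hne
    have hj : j ≠ 0 := by rintro rfl; simp_all
    simp [MvPolynomial.eval_monomial, hj]
  · simp

variable {p q : ℝ[X]}

theorem eval_homogenize_inversion {n : ℕ} (hp : p.natDegree = n) (hq : q.natDegree = n)
    (hL : p.leadingCoeff * L ^ n = q.leadingCoeff) (h : ∀ t, p.eval (φ t) = q.eval t) (w : ℝ) :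
    (p.homogenize n).eval ![inversion φ L w, w] = (q.homogenize n).eval ![1, w] := by
  rcases eq_or_ne w 0 with rfl | hw
  · rw [eval_homogenize_zero, eval_homogenize_zero, inversion_zero, ← hp, coeff_natDegree, hp, hL,
      ← hq, coeff_natDegree, one_pow, mul_one]
  · rw [eval_homogenize hp.le _ hw, eval_homogenize hq.le _ hw, inversion_of_ne_zero hw]
    simp [← h, hw]

theorem contDiff_mvPolynomial_eval {ι : Type*} [Fintype ι] (P : MvPolynomial ι ℝ) {n : ℕ∞} :
    ContDiff ℝ n fun x : ι → ℝ => P.eval x := by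
  simp only [MvPolynomial.eval_eq']
  fun_prop

theorem exists_lipschitzOnWith_inversion {n : ℕ} (hn : n ≠ 0) (hp : p.natDegree = n)
    (hq : q.natDegree = n) (hL : p.leadingCoeff * L ^ n = q.leadingCoeff) (hL0 : L ≠ 0)
    (hlim : Tendsto (fun t => φ t / t) (cobounded ℝ) (𝓝 L))
    (h : ∀ t, p.eval (φ t) = q.eval t) :
    ∃ K, ∃ s ∈ 𝓝 0, LipschitzOnWith K (inversion φ L) s := by
  let f : ℝ × ℝ → ℝ := fun z => (p.homogenize n).eval ![z.2, z.1] - (q.homogenize n).eval ![1, z.1]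
  have hf : ContDiff ℝ 1 f := by
    refine ((contDiff_mvPolynomial_eval _).comp ?_).sub ((contDiff_mvPolynomial_eval _).comp ?_)
    · exact contDiff_pi.2 (Fin.forall_fin_two.2 ⟨contDiff_snd, contDiff_fst⟩)
    · exact contDiff_pi.2 (Fin.forall_fin_two.2 ⟨contDiff_const, contDiff_fst⟩)
  have hfk (w : ℝ) : f (w, inversion φ L w) = 0 :=
    sub_eq_zero.2 (eval_homogenize_inversion hp hq hL h w)
  have hderiv : HasDerivAt (fun y => f (0, y)) (p.coeff n * (n * L ^ (n - 1))) L := by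
    simp only [f, eval_homogenize_zero]
    exact ((hasDerivAt_pow n L).const_mul _).sub_const _
  have hderiv0 : p.coeff n * (n * L ^ (n - 1)) ≠ 0 := by
    have hp0 : p ≠ 0 := by rintro rfl; exact hn hp.symm
    have hlead : p.coeff n ≠ 0 := by rwa [← hp, coeff_natDegree, leadingCoeff_ne_zero]
    positivity
  refine exists_lipschitzOnWith_of_implicit (f := f) hf.contDiffAt ?_ (continuousAt_inversion hlim)
    (.of_forall fun w => (hfk w).trans (hfk 0).symm)
  rw [inversion_zero]
  exact isInvertible_fderiv_comp_inr (hf.differentiable one_ne_zero _) hderiv hderiv0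

theorem abs_apply_inv_le {K : NNReal} (hφ : LipschitzWith K φ) (w : ℝ) :
    |φ w⁻¹| ≤ |φ 0| + K * |w|⁻¹ := by
  have hlip : |φ w⁻¹ - φ 0| ≤ K * |w|⁻¹ := by simpa [Real.dist_eq] using hφ.dist_le_mul w⁻¹ 0
  linarith [abs_sub_abs_le_abs_sub (φ w⁻¹) (φ 0)]

theorem abs_inversion_sub_le {K : NNReal} (hφ : LipschitzWith K φ) {w : ℝ} (hw : w ≠ 0) (v : ℝ) :
    |inversion φ L w - inversion φ L v| ≤ (|φ 0| + (2 * K + |L|) * |w|⁻¹) * |w - v| := by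
  have hφw := abs_apply_inv_le hφ w
  have hK : 0 ≤ K * |w|⁻¹ := by positivity
  have hL : 0 ≤ |L| * |w|⁻¹ := by positivity
  rw [inversion_of_ne_zero hw]
  rcases eq_or_ne v 0 with rfl | hv
  · calc |w * φ w⁻¹ - inversion φ L 0| ≤ |w| * |φ w⁻¹| + |L| := by
          rw [inversion_zero, ← abs_mul]
          exact abs_sub _ _
      _ = (|φ w⁻¹| + |L| * |w|⁻¹) * |w - 0| := by rw [sub_zero]; field_simp
      _ ≤ (|φ 0| + (2 * K + |L|) * |w|⁻¹) * |w - 0| :=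
          mul_le_mul_of_nonneg_right (by linarith) (abs_nonneg _)
  · have hlip : |φ w⁻¹ - φ v⁻¹| ≤ K * (|w - v| * |w|⁻¹ * |v|⁻¹) := by
      have hdist : |w⁻¹ - v⁻¹| = |w - v| * |w|⁻¹ * |v|⁻¹ := by
        rw [inv_sub_inv hw hv, abs_div, abs_mul, abs_sub_comm]
        field_simp
      simpa only [Real.dist_eq, hdist] using hφ.dist_le_mul w⁻¹ v⁻¹
    calc |w * φ w⁻¹ - inversion φ L v| = |(w - v) * φ w⁻¹ + v * (φ w⁻¹ - φ v⁻¹)| := by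
          rw [inversion_of_ne_zero hv]; ring_nf
      _ ≤ |w - v| * |φ w⁻¹| + |v| * (K * (|w - v| * |w|⁻¹ * |v|⁻¹)) := by
          refine (abs_add_le _ _).trans ?_
          rw [abs_mul, abs_mul]
          gcongr
      _ = (|φ w⁻¹| + K * |w|⁻¹) * |w - v| := by field_simp
      _ ≤ (|φ 0| + (2 * K + |L|) * |w|⁻¹) * |w - v| :=
          mul_le_mul_of_nonneg_right (by linarith) (abs_nonneg _)

theorem lipschitzWith_inversion_of_nhds (hφ : ∃ K, LipschitzWith K φ)
    (h : ∃ K, ∃ s ∈ 𝓝 0, LipschitzOnWith K (inversion φ L) s) :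
    ∃ K, LipschitzWith K (inversion φ L) := by
  obtain ⟨K, hK⟩ := hφ
  obtain ⟨C, s, hs, hC⟩ := h
  obtain ⟨δ, hδ, hδs⟩ := Metric.mem_nhds_iff.1 hs
  set C' : ℝ := |φ 0| + (2 * K + |L|) * δ⁻¹
  have hfar {w : ℝ} (hw : δ ≤ |w|) (v : ℝ) :
      |inversion φ L w - inversion φ L v| ≤ max (C : ℝ) C' * |w - v| := by
    refine (abs_inversion_sub_le hK (abs_pos.1 (hδ.trans_le hw)) v).trans ?_
    gcongr
    exact le_max_of_le_right (by simp only [C']; gcongr)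
  refine ⟨_, LipschitzWith.of_dist_le' (K := max (C : ℝ) C') fun w v => ?_⟩
  rw [Real.dist_eq, Real.dist_eq]
  rcases le_or_gt δ |w| with hw | hw
  · exact hfar hw v
  rcases le_or_gt δ |v| with hv | hv
  · rw [abs_sub_comm, abs_sub_comm w]
    exact hfar hv w
  · refine (hC.dist_le_mul w (hδs (by simpa)) v (hδs (by simpa))).trans ?_
    rw [Real.dist_eq]
    gcongr
    exact le_max_left ..

/-- A bi-Lipschitz map of the line that, in the charts at infinity, extends to a Lipschitz map of
the projective line. The number `L` is the (nonzero) limit of `φ t / t` at infinity. -/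
structure IsProjectivelyBilipschitz (φ : ℝ → ℝ) (L : ℝ) : Prop where
  isBilipschitz : IsBilipschitz φ
  ne_zero : L ≠ 0
  lipschitz_inversion : ∃ K, LipschitzWith K (inversion φ L)

theorem exists_isProjectivelyBilipschitz (hp : p.natDegree ≠ 0) (hφ : IsBilipschitz φ)
    (h : ∀ t, p.eval (φ t) = q.eval t) :
    ∃ L, p.leadingCoeff * L ^ p.natDegree = q.leadingCoeff ∧ IsProjectivelyBilipschitz φ L := by
  have hp0 : p ≠ 0 := by rintro rfl; simp at hp
  have hpq := natDegree_eq_of_eval_comp hp0 hφ h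
  obtain ⟨L, hL, hlim⟩ := exists_tendsto_div_of_eval_comp hp hφ h
  have hL0 : L ≠ 0 := by
    rintro rfl
    rw [zero_pow hp, mul_zero, eq_comm, leadingCoeff_eq_zero] at hL
    simp [hL, hp] at hpq
  exact ⟨L, hL, hφ, hL0, lipschitzWith_inversion_of_nhds hφ.1
    (exists_lipschitzOnWith_inversion hp rfl hpq.symm hL hL0 hlim h)⟩

end Inversion

section Homogenization

variable {φ : ℝ → ℝ} {L : ℝ}

theorem IsProjectivelyBilipschitz.neg (hφ : IsProjectivelyBilipschitz φ L) :
    IsProjectivelyBilipschitz (fun t => -φ t) (-L) where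
  isBilipschitz := by
    obtain ⟨⟨K, hK⟩, K', hK'⟩ := hφ.isBilipschitz
    exact ⟨⟨K, hK.neg⟩, K', fun x y => by simpa using hK' x y⟩
  ne_zero := neg_ne_zero.2 hφ.ne_zero
  lipschitz_inversion := by
    obtain ⟨K, hK⟩ := hφ.lipschitz_inversion
    have hinv : inversion (fun t => -φ t) (-L) = -inversion φ L := by
      ext w
      rcases eq_or_ne w 0 with rfl | hw <;> simp [inversion_of_ne_zero, *]
    exact ⟨K, hinv ▸ hK.neg⟩

theorem IsProjectivelyBilipschitz.comp_neg (hφ : IsProjectivelyBilipschitz φ L) :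
    IsProjectivelyBilipschitz (fun t => φ (-t)) (-L) where
  isBilipschitz := by
    obtain ⟨⟨K, hK⟩, K', hK'⟩ := hφ.isBilipschitz
    exact ⟨⟨K, fun x y => by simpa using hK (-x) (-y)⟩, K', fun x y => by simpa using hK' (-x) (-y)⟩
  ne_zero := neg_ne_zero.2 hφ.ne_zero
  lipschitz_inversion := by
    obtain ⟨K, hK⟩ := hφ.lipschitz_inversion
    have hinv : inversion (fun t => φ (-t)) (-L) = fun w => -inversion φ L (-w) := by
      ext w
      rcases eq_or_ne w 0 with rfl | hw <;> simp [inversion_of_ne_zero, inv_neg, *]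
    exact ⟨K, fun x y => by simpa [hinv] using hK (-x) (-y)⟩

/-- The `1`-homogeneous extension `(u, y) ↦ u * φ (y / u)` of `φ`, with the value `L * y` on the
line `u = 0`. -/
noncomputable def homogenization (φ : ℝ → ℝ) (L u y : ℝ) : ℝ :=
  if u = 0 then L * y else u * φ (y / u)

@[simp] theorem homogenization_zero (y : ℝ) : homogenization φ L 0 y = L * y := if_pos rfl

theorem homogenization_of_ne_zero {u : ℝ} (hu : u ≠ 0) (y : ℝ) :
    homogenization φ L u y = u * φ (y / u) := if_neg hu

theorem homogenization_apply_zero (u : ℝ) : homogenization φ L u 0 = u * φ 0 := by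
  rcases eq_or_ne u 0 with rfl | hu <;> simp [homogenization_of_ne_zero, *]

theorem homogenization_eq_mul_inversion (u : ℝ) {y : ℝ} (hy : y ≠ 0) :
    homogenization φ L u y = y * inversion φ L (u / y) := by
  rcases eq_or_ne u 0 with rfl | hu
  · simp [mul_comm]
  · rw [homogenization_of_ne_zero hu, inversion_of_ne_zero (div_ne_zero hu hy), inv_div]
    field_simp

theorem IsProjectivelyBilipschitz.lipschitz_homogenization_left
    (hφ : IsProjectivelyBilipschitz φ L) :
    ∃ K, ∀ y, LipschitzWith K fun u => homogenization φ L u y := by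
  obtain ⟨C, hC⟩ := hφ.lipschitz_inversion
  refine ⟨max C ‖φ 0‖₊, fun y => .of_dist_le_mul fun u v => ?_⟩
  rw [NNReal.coe_max, Real.dist_eq, Real.dist_eq]
  rcases eq_or_ne y 0 with rfl | hy
  · rw [homogenization_apply_zero, homogenization_apply_zero, ← sub_mul, abs_mul, mul_comm]
    gcongr
    exact le_max_right ..
  · calc |homogenization φ L u y - homogenization φ L v y|
        = |y| * |inversion φ L (u / y) - inversion φ L (v / y)| := by
          simp only [homogenization_eq_mul_inversion _ hy, ← mul_sub, abs_mul]
      _ ≤ |y| * (C * |u / y - v / y|) := by gcongr; exact hC.dist_le_mul _ _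
      _ = C * |u - v| := by rw [← sub_div, abs_div]; field_simp
      _ ≤ max (C : ℝ) ‖φ 0‖ * |u - v| := by gcongr; exact le_max_left ..

theorem IsBilipschitz.lipschitz_homogenization (hφ : IsBilipschitz φ) (L : ℝ) :
    ∃ K, ∀ u, LipschitzWith K (homogenization φ L u) := by
  obtain ⟨K, hK⟩ := hφ.1
  refine ⟨max K ‖L‖₊, fun u => .of_dist_le_mul fun y z => ?_⟩
  rw [NNReal.coe_max, Real.dist_eq, Real.dist_eq]
  rcases eq_or_ne u 0 with rfl | hu
  · rw [homogenization_zero, homogenization_zero, ← mul_sub, abs_mul]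
    gcongr
    exact le_max_right ..
  · calc |homogenization φ L u y - homogenization φ L u z|
        = |u| * |φ (y / u) - φ (z / u)| := by
          simp only [homogenization_of_ne_zero hu, ← mul_sub, abs_mul]
      _ ≤ |u| * (K * |y / u - z / u|) := by gcongr; exact hK.dist_le_mul _ _
      _ = K * |y - z| := by rw [← sub_div, abs_div]; field_simp
      _ ≤ max (K : ℝ) ‖L‖ * |y - z| := by gcongr; exact le_max_left ..

theorem IsBilipschitz.antilipschitz_homogenization (hφ : IsBilipschitz φ) (hL : L ≠ 0) :
    ∃ K, ∀ u, AntilipschitzWith K (homogenization φ L u) := by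
  obtain ⟨K, hK⟩ := hφ.2
  refine ⟨max K ‖L⁻¹‖₊, fun u => .of_le_mul_dist fun y z => ?_⟩
  rw [NNReal.coe_max, Real.dist_eq, Real.dist_eq]
  rcases eq_or_ne u 0 with rfl | hu
  · calc |y - z| = ‖L⁻¹‖ * |L * y - L * z| := by
          rw [← mul_sub, abs_mul, norm_inv, Real.norm_eq_abs,
            inv_mul_cancel_left₀ (abs_ne_zero.2 hL)]
      _ ≤ max (K : ℝ) ‖L⁻¹‖ * |homogenization φ L 0 y - homogenization φ L 0 z| := by
          simp only [homogenization_zero]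
          gcongr
          exact le_max_right ..
  · calc |y - z| = |u| * |y / u - z / u| := by rw [← sub_div, abs_div]; field_simp
      _ ≤ |u| * (K * |φ (y / u) - φ (z / u)|) := by gcongr; exact hK.le_mul_dist _ _
      _ = K * |homogenization φ L u y - homogenization φ L u z| := by
          simp only [homogenization_of_ne_zero hu, ← mul_sub, abs_mul]
          ring
      _ ≤ max (K : ℝ) ‖L⁻¹‖ * |homogenization φ L u y - homogenization φ L u z| := by
          gcongr
          exact le_max_left ..

end Homogenization

section Geometry

theorem isBilipschitz_triangular {X X' Y Y' : Type*} [PseudoMetricSpace X] [PseudoMetricSpace X']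
    [PseudoMetricSpace Y] [PseudoMetricSpace Y'] {f : X → X'} {S : X → Y → Y'}
    (hf : IsBilipschitz f) (hS₁ : ∃ K, ∀ y, LipschitzWith K fun x => S x y)
    (hS₂ : ∃ K, ∀ x, LipschitzWith K (S x)) (hS₂' : ∃ K, ∀ x, AntilipschitzWith K (S x)) :
    IsBilipschitz fun p : X × Y => (f p.1, S p.1 p.2) := by
  obtain ⟨⟨A, hA⟩, A', hA'⟩ := hf
  obtain ⟨B, hB⟩ := hS₁
  obtain ⟨C, hC⟩ := hS₂
  obtain ⟨C', hC'⟩ := hS₂'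
  refine ⟨⟨_, (hA.comp .prod_fst).prodMk (LipschitzWith.uncurry hB hC)⟩,
    max A' (C' * (1 + B * A')), ?_⟩
  rintro ⟨x, y⟩ ⟨x', y'⟩
  set D := edist (f x, S x y) (f x', S x' y')
  have hx : edist x x' ≤ A' * D := (hA' x x').trans (by gcongr; exact le_max_left _ _)
  have hy : edist y y' ≤ C' * (1 + B * A') * D := calc
    edist y y' ≤ C' * edist (S x y) (S x y') := hC' x y y'
    _ ≤ C' * (edist (S x y) (S x' y') + edist (S x' y') (S x y')) := by
      gcongr; exact edist_triangle _ _ _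
    _ ≤ C' * (D + B * (A' * D)) := by
      gcongr
      · exact le_max_right _ _
      · rw [edist_comm]
        exact (hB y' x x').trans (by gcongr)
    _ = C' * (1 + B * A') * D := by ring
  rw [Prod.edist_eq]
  push_cast
  refine max_le (hx.trans ?_) (hy.trans ?_) <;> gcongr
  exacts [le_max_left _ _, le_max_right _ _]

theorem lipschitzWith_ite_le {X : Type*} [PseudoMetricSpace X] {f g : ℝ → X} {K : NNReal} {a : ℝ}
    (hf : LipschitzWith K f) (hg : LipschitzWith K g) (hfg : f a = g a) :
    LipschitzWith K fun x => if a ≤ x then f x else g x := by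
  refine LipschitzWith.of_dist_le_mul fun x y => ?_
  wlog hxy : y ≤ x generalizing x y
  · rw [dist_comm, dist_comm x]
    exact this y x (le_of_not_ge hxy)
  rcases le_or_gt a y with hy | hy
  · simpa only [hy, hy.trans hxy, if_true] using hf.dist_le_mul x y
  rcases le_or_gt a x with hx | hx
  · simp only [hx, hy.not_ge, if_true, if_false]
    calc dist (f x) (g y) ≤ K * dist x a + K * dist a y :=
          (dist_triangle _ (f a) _).trans
            (add_le_add (hf.dist_le_mul x a) (hfg ▸ hg.dist_le_mul a y))
      _ = K * dist x y := by
          rw [Real.dist_eq, Real.dist_eq, Real.dist_eq, abs_of_nonneg (sub_nonneg.2 hx),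
            abs_of_nonneg (sub_nonneg.2 hy.le), abs_of_nonneg (sub_nonneg.2 hxy)]
          ring
  · simpa only [hx.not_ge, hy.not_ge, if_false] using hg.dist_le_mul x y

theorem isBilipschitz_ite_nonneg_mul {ρ : ℝ} (hρ : 0 < ρ) :
    IsBilipschitz fun x : ℝ => if 0 ≤ x then x else ρ * x := by
  have hlip (σ : ℝ) : LipschitzWith (max 1 ‖σ‖₊) fun x : ℝ => if 0 ≤ x then x else σ * x :=
    lipschitzWith_ite_le (LipschitzWith.id.weaken (le_max_left ..))
      ((lipschitzWith_smul σ).weaken (le_max_right ..)) (mul_zero σ).symm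
  refine ⟨⟨_, hlip ρ⟩, _, (hlip ρ⁻¹).to_rightInverse fun x => ?_⟩
  rcases le_or_gt 0 x with hx | hx
  · simp [hx]
  · simp [hx.not_ge, mul_nonneg_iff_of_pos_left hρ, hρ.ne']

theorem lipschitzWith_min_abs_rpow {β : ℝ} (hβ : 1 ≤ β) :
    ∃ K, LipschitzWith K fun x : ℝ => min |x| 1 ^ β := by
  have hrpow : LipschitzOnWith ‖β‖₊ (fun t : ℝ => t ^ β) (Set.Icc 0 1) := by
    refine (convex_Icc 0 1).lipschitzOnWith_of_nnnorm_hasDerivWithin_le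
      (fun t _ => (Real.hasDerivAt_rpow_const (.inr hβ)).hasDerivWithinAt) fun t ht => ?_
    rw [nnnorm_mul]
    refine mul_le_of_le_one_right' (NNReal.coe_le_one.1 ?_)
    rw [coe_nnnorm, Real.norm_of_nonneg (Real.rpow_nonneg ht.1 _)]
    exact Real.rpow_le_one ht.1 ht.2 (sub_nonneg.2 hβ)
  have hmin : LipschitzWith 1 fun x : ℝ => min |x| 1 := by
    simpa using (lipschitzWith_one_norm (E := ℝ)).min_const 1
  exact ⟨_, lipschitzOnWith_univ.1 <|
    hrpow.comp hmin.lipschitzOnWith fun x _ => ⟨by positivity, min_le_right ..⟩⟩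

theorem isBilipschitz_homogenization_ite {ψ₁ ψ₂ f u : ℝ → ℝ} {L : ℝ}
    (hψ₁ : IsProjectivelyBilipschitz ψ₁ L) (hψ₂ : IsProjectivelyBilipschitz ψ₂ L)
    (hf : IsBilipschitz f) (hu : ∃ K, LipschitzWith K u) (hu0 : u 0 = 0) :
    IsBilipschitz fun p : ℝ × ℝ =>
      (f p.1, if 0 ≤ p.1 then homogenization ψ₁ L (u p.1) p.2 else
        homogenization ψ₂ L (u p.1) p.2) := by
  obtain ⟨K, hK⟩ := hu
  refine isBilipschitz_triangular (S := fun x y => if 0 ≤ x then homogenization ψ₁ L (u x) y else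
    homogenization ψ₂ L (u x) y) hf ?_ ?_ ?_
  · obtain ⟨K₁, hK₁⟩ := hψ₁.lipschitz_homogenization_left
    obtain ⟨K₂, hK₂⟩ := hψ₂.lipschitz_homogenization_left
    refine ⟨max (K₁ * K) (K₂ * K), fun y => lipschitzWith_ite_le
      (((hK₁ y).comp hK).weaken (le_max_left ..)) (((hK₂ y).comp hK).weaken (le_max_right ..)) ?_⟩
    simp [hu0]
  · obtain ⟨K₁, hK₁⟩ := hψ₁.isBilipschitz.lipschitz_homogenization L
    obtain ⟨K₂, hK₂⟩ := hψ₂.isBilipschitz.lipschitz_homogenization L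
    refine ⟨max K₁ K₂, fun x => ?_⟩
    split_ifs
    exacts [(hK₁ _).weaken (le_max_left ..), (hK₂ _).weaken (le_max_right ..)]
  · obtain ⟨K₁, hK₁⟩ := hψ₁.isBilipschitz.antilipschitz_homogenization hψ₁.ne_zero
    obtain ⟨K₂, hK₂⟩ := hψ₂.isBilipschitz.antilipschitz_homogenization hψ₂.ne_zero
    refine ⟨max K₁ K₂, fun x y z => ?_⟩
    split_ifs
    · exact (hK₁ _ y z).trans (by gcongr; exact le_max_left ..)
    · exact (hK₂ _ y z).trans (by gcongr; exact le_max_right ..)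

theorem IsBilipschitz.localLipEquiv {F G : ℝ × ℝ → ℝ} {Φ : ℝ × ℝ → ℝ × ℝ} (hΦ : IsBilipschitz Φ)
    (hΦ0 : Φ 0 = 0) (hFG : ∀ᶠ p in 𝓝 0, G (Φ p) = F p) : LocalLipEquiv F G := by
  obtain ⟨⟨K, hK⟩, K', hK'⟩ := hΦ
  refine ⟨{p | G (Φ p) = F p}, hFG, Φ, hK'.injective.injOn, hΦ0, ⟨K, hK.lipschitzOnWith⟩,
    ⟨(K' + 1 : ℝ)⁻¹, by positivity, fun p _ q _ => ?_⟩, fun p hp => hp⟩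
  rw [inv_mul_le_iff₀ (by positivity)]
  refine (hK'.le_mul_dist p q).trans ?_
  gcongr
  linarith

/-- `F (x, y)` is `β`-quasihomogeneous of degree `d`: the variable `x` has weight `1` and `y` has
weight `β`. -/
def IsQuasihomogeneous (β : ℝ) (d : ℕ) (F : ℝ → ℝ → ℝ) : Prop :=
  ∀ t x y : ℝ, 0 < t → F (t * x) (t ^ β * y) = t ^ d * F x y

variable {β : ℝ} {d : ℕ} {F G : ℝ → ℝ → ℝ}

theorem IsQuasihomogeneous.apply_homogenization (hF : IsQuasihomogeneous β d F)
    (hG : IsQuasihomogeneous β d G) (hFc : Continuous (Function.uncurry F))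
    (hGc : Continuous (Function.uncurry G)) (hβ : 0 < β) {φ : ℝ → ℝ} {L a b : ℝ}
    (hφ : IsProjectivelyBilipschitz φ L) (h : ∀ t, G b (φ t) = F a t) {τ : ℝ} (hτ : 0 ≤ τ) (y : ℝ) :
    G (τ * b) (homogenization φ L (τ ^ β) y) = F (τ * a) y := by
  obtain ⟨K, hK⟩ := hφ.lipschitz_homogenization_left
  have hGcont : Continuous fun τ => G (τ * b) (homogenization φ L (τ ^ β) y) :=
    hGc.comp <| (continuous_mul_const b).prodMk <|
      (hK y).continuous.comp (Real.continuous_rpow_const hβ.le)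
  have hFcont : Continuous fun τ => F (τ * a) y :=
    hFc.comp ((continuous_mul_const a).prodMk continuous_const)
  have hpos : Set.EqOn (fun τ => G (τ * b) (homogenization φ L (τ ^ β) y))
      (fun τ => F (τ * a) y) (Set.Ioi 0) := fun τ hτ => by
    have hτβ : τ ^ β ≠ 0 := (Real.rpow_pos_of_pos hτ β).ne'
    calc G (τ * b) (homogenization φ L (τ ^ β) y) = τ ^ d * G b (φ (y / τ ^ β)) := by
          rw [homogenization_of_ne_zero hτβ, hG _ _ _ hτ]
      _ = F (τ * a) (τ ^ β * (y / τ ^ β)) := by rw [h, hF _ _ _ hτ]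
      _ = F (τ * a) y := by rw [mul_div_cancel₀ _ hτβ]
  exact hpos.closure hGcont hFcont (closure_Ioi (0 : ℝ) ▸ hτ)

theorem IsQuasihomogeneous.localLipEquiv (hF : IsQuasihomogeneous β d F)
    (hG : IsQuasihomogeneous β d G) (hFc : Continuous (Function.uncurry F))
    (hGc : Continuous (Function.uncurry G)) (hβ : 1 ≤ β) {ψ₁ ψ₂ : ℝ → ℝ} {l ρ L : ℝ} (hl : l ≠ 0)
    (hρ : 0 < ρ) (hψ₁ : IsProjectivelyBilipschitz ψ₁ L) (hψ₂ : IsProjectivelyBilipschitz ψ₂ L)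
    (h₁ : ∀ t, G l (ψ₁ t) = F 1 t) (h₂ : ∀ t, G (l * -ρ) (ψ₂ t) = F (-1) t) :
    LocalLipEquiv (fun z => F z.1 z.2) (fun z => G z.1 z.2) := by
  have hβ0 : 0 < β := zero_lt_one.trans_le hβ
  have hu0 : min |(0 : ℝ)| 1 ^ β = 0 := by simp [hβ0.ne']
  refine (isBilipschitz_homogenization_ite hψ₁ hψ₂
    ((isBilipschitz_const_smul hl).comp (isBilipschitz_ite_nonneg_mul hρ))
    (lipschitzWith_min_abs_rpow hβ) hu0).localLipEquiv ?_ ?_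
  · simp [hβ0.ne']
  have hsmall : ∀ᶠ p : ℝ × ℝ in 𝓝 0, |p.1| < 1 :=
    (continuous_fst.abs.tendsto' 0 0 (by simp)).eventually (gt_mem_nhds one_pos)
  filter_upwards [hsmall] with ⟨x, y⟩ hx
  rw [min_eq_left hx.le]
  rcases le_or_gt 0 x with hx0 | hx0
  · simpa [hx0, abs_of_nonneg, mul_comm] using
      hF.apply_homogenization hG hFc hGc hβ0 hψ₁ h₁ (abs_nonneg x) y
  · simpa [hx0.not_ge, abs_of_neg hx0, mul_assoc, mul_left_comm, mul_comm] using
      hF.apply_homogenization hG hFc hGc hβ0 hψ₂ h₂ (abs_nonneg x) y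

end Geometry

section WeightedHomogeneous

open MvPolynomial

theorem eval_pow_mul_of_isWeightedHomogeneous {σ R : Type*} [CommSemiring R]
    {w : σ → ℕ} {n : ℕ} {F : MvPolynomial σ R} (hF : IsWeightedHomogeneous w F n) (t : R)
    (x : σ → R) : eval (fun i => t ^ w i * x i) F = t ^ n * eval x F := by
  rw [eval_eq, eval_eq, Finset.mul_sum]
  refine Finset.sum_congr rfl fun m hm => ?_
  simp only [← hF (mem_support_iff.1 hm), Finsupp.weight_apply, Finsupp.sum, smul_eq_mul, mul_pow,
    Finset.prod_mul_distrib, ← pow_mul, Finset.prod_pow_eq_pow_sum, mul_comm]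
  ring

theorem isWeightedHomogeneous_of_eval_pow_mul {σ R : Type*} [CommRing R] [IsDomain R] [Infinite R]
    {w : σ → ℕ} {n : ℕ} {F : MvPolynomial σ R} {t : R}
    (ht : Function.Injective (t ^ · : ℕ → R))
    (h : ∀ x : σ → R, eval (fun i => t ^ w i * x i) F = t ^ n * eval x F) :
    IsWeightedHomogeneous w F n := by
  classical
  have hrescale : ∑ m ∈ F.support, monomial m (t ^ Finsupp.weight w m * F.coeff m) =
      C (t ^ n) * F := by
    refine MvPolynomial.funext fun x => ?_
    rw [map_sum, map_mul, eval_C, ← h, eval_eq]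
    refine Finset.sum_congr rfl fun m _ => ?_
    simp only [eval_monomial, Finsupp.prod, Finsupp.weight_apply, Finsupp.sum, smul_eq_mul, mul_pow,
      Finset.prod_mul_distrib, ← pow_mul, Finset.prod_pow_eq_pow_sum, mul_comm]
    ring
  intro m hm
  have hcoeff := congrArg (coeff m) hrescale
  simp only [coeff_sum, coeff_monomial, coeff_C_mul, Finset.sum_ite_eq', mem_support_iff, hm,
    ne_eq, not_false_eq_true, if_true] at hcoeff
  exact ht (mul_right_cancel₀ hm hcoeff)

variable {r s d : ℕ}

theorem IsQuasihomogeneous.isWeightedHomogeneous (hs : s ≠ 0) {F : MvPolynomial (Fin 2) ℝ}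
    (hF : IsQuasihomogeneous (r / s : ℝ) d (eval2 F)) :
    IsWeightedHomogeneous ![s, r] F (s * d) := by
  have hpow : ((2 : ℝ) ^ s) ^ (r / s : ℝ) = 2 ^ r := by
    rw [← Real.rpow_natCast_mul zero_le_two, mul_div_cancel₀ _ (Nat.cast_ne_zero.2 hs),
      Real.rpow_natCast]
  refine isWeightedHomogeneous_of_eval_pow_mul (t := 2)
    (pow_right_injective₀ two_pos (by norm_num)) fun x => ?_
  have h := hF (2 ^ s) (x 0) (x 1) (by positivity)
  rw [hpow, ← pow_mul] at h
  refine (congrArg (eval · F) ?_).trans (h.trans (congrArg (_ * eval · F) ?_)) <;>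
    ext i <;> fin_cases i <;> rfl

theorem eval2_pow_mul {n : ℕ} {F : MvPolynomial (Fin 2) ℝ}
    (hF : IsWeightedHomogeneous ![s, r] F n) (t x y : ℝ) :
    eval2 F (t ^ s * x) (t ^ r * y) = t ^ n * eval2 F x y := by
  rw [eval2, eval2, ← eval_pow_mul_of_isWeightedHomogeneous hF]
  congr 2
  ext i
  fin_cases i <;> rfl

theorem continuous_eval2 (F : MvPolynomial (Fin 2) ℝ) : Continuous (Function.uncurry (eval2 F)) :=
  (MvPolynomial.continuous_eval F).comp <| continuous_pi fun i => by
    fin_cases i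
    exacts [continuous_fst, continuous_snd]

theorem eq_of_weight_eq_of_apply_one_eq {m m' : Fin 2 →₀ ℕ} {n : ℕ} (hs : s ≠ 0)
    (hm : Finsupp.weight ![s, r] m = n) (hm' : Finsupp.weight ![s, r] m' = n) (h : m 1 = m' 1) :
    m = m' := by
  simp only [Finsupp.weight_eq_sum, Fin.sum_univ_two, Matrix.cons_val_zero, Matrix.cons_val_one,
    smul_eq_mul, h] at hm hm'
  ext i
  fin_cases i
  · exact mul_right_cancel₀ hs (add_right_cancel (hm.trans hm'.symm))
  · exact h

variable {R : Type*} [CommSemiring R]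

/-- The restriction `F(x, T)` of a polynomial in two variables to a vertical line, as a polynomial
in `T`. For `x = ±1` its values are the height functions of `F`. -/
noncomputable def slice (F : MvPolynomial (Fin 2) R) (x : R) : Polynomial R :=
  aeval ![Polynomial.C x, Polynomial.X] F

theorem eval_slice (F : MvPolynomial (Fin 2) R) (x t : R) :
    (slice F x).eval t = eval ![x, t] F := by
  rw [slice, aeval_def, ← Polynomial.coe_evalRingHom, hom_eval₂, eval, coe_eval₂Hom]
  congr 1
  · ext; simp
  · ext i; fin_cases i <;> simp

theorem coeff_slice (F : MvPolynomial (Fin 2) R) (x : R) (k : ℕ) :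
    (slice F x).coeff k = ∑ m ∈ F.support, if m 1 = k then F.coeff m * x ^ m 0 else 0 := by
  have hterm (m : Fin 2 →₀ ℕ) : Polynomial.coeff (aeval ![Polynomial.C x, Polynomial.X]
      (monomial m (F.coeff m))) k = if m 1 = k then F.coeff m * x ^ m 0 else 0 := by
    rw [aeval_monomial, Finsupp.prod_fintype _ _ fun i => pow_zero _]
    simp only [Polynomial.algebraMap_eq, Fin.prod_univ_two, Matrix.cons_val_zero,
      Matrix.cons_val_one, ← Polynomial.C_pow, Polynomial.coeff_C_mul, Polynomial.coeff_X_pow,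
      mul_ite, mul_one, mul_zero, eq_comm]
  rw [slice]
  conv_lhs => rw [F.as_sum]
  rw [map_sum, Polynomial.finsetSum_coeff]
  exact Finset.sum_congr rfl fun m _ => hterm m

theorem exists_leadingCoeff_slice [NoZeroDivisors R] {n : ℕ} {F : MvPolynomial (Fin 2) R}
    (hs : s ≠ 0) (hF : IsWeightedHomogeneous ![s, r] F n) (hF0 : F ≠ 0) :
    ∃ m ∈ F.support, (∀ e ∈ F.support, e 1 ≤ m 1) ∧ ∀ x ≠ 0,
      (slice F x).natDegree = m 1 ∧ (slice F x).leadingCoeff = F.coeff m * x ^ m 0 := by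
  obtain ⟨m, hm, hmax⟩ := F.support.exists_max_image (· 1) (support_nonempty.2 hF0)
  refine ⟨m, hm, hmax, fun x hx => ?_⟩
  have hcoeff : (slice F x).coeff (m 1) = F.coeff m * x ^ m 0 := by
    rw [coeff_slice, Finset.sum_eq_single m (fun e he hne => if_neg fun h => hne ?_)
      (absurd hm), if_pos rfl]
    exact eq_of_weight_eq_of_apply_one_eq hs (hF (mem_support_iff.1 he))
      (hF (mem_support_iff.1 hm)) h
  have hdeg : (slice F x).natDegree = m 1 := by
    refine Polynomial.natDegree_eq_of_le_of_coeff_ne_zero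
      (Polynomial.natDegree_le_iff_coeff_eq_zero.2 fun k hk => ?_) ?_
    · rw [coeff_slice]
      exact Finset.sum_eq_zero fun e he => if_neg ((hmax e he).trans_lt hk).ne
    · rw [hcoeff]
      exact mul_ne_zero (mem_support_iff.1 hm) (pow_ne_zero _ hx)
  exact ⟨hdeg, by rw [Polynomial.leadingCoeff, hdeg, hcoeff]⟩

theorem abs_leadingCoeff_slice_neg {n : ℕ} {F : MvPolynomial (Fin 2) ℝ} (hs : s ≠ 0)
    (hF : IsWeightedHomogeneous ![s, r] F n) (x : ℝ) :
    |(slice F (-x)).leadingCoeff| = |(slice F x).leadingCoeff| := by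
  rcases eq_or_ne F 0 with rfl | hF0
  · simp [slice]
  rcases eq_or_ne x 0 with rfl | hx
  · rw [neg_zero]
  obtain ⟨m, -, -, h⟩ := exists_leadingCoeff_slice hs hF hF0
  rw [(h _ hx).2, (h _ (neg_ne_zero.2 hx)).2, abs_mul, abs_mul, abs_pow, abs_pow, abs_neg]

theorem exists_eq_C_mul_X_pow {F : MvPolynomial (Fin 2) R} (hs : s ≠ 0)
    (hF : IsWeightedHomogeneous ![s, r] F (s * d)) (h : ∀ m ∈ F.support, m 1 = 0) :
    ∃ c, F = C c * X 0 ^ d := by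
  classical
  have hm (m) (hm : m ∈ F.support) : m = Finsupp.single 0 d := by
    refine eq_of_weight_eq_of_apply_one_eq hs (hF (mem_support_iff.1 hm)) ?_ (by simp [h m hm])
    simp [Finsupp.weight_single, mul_comm]
  refine ⟨F.coeff (Finsupp.single 0 d), ?_⟩
  rw [X_pow_eq_monomial, C_mul_monomial, mul_one]
  ext e
  rw [coeff_monomial]
  split_ifs with he
  · rw [he]
  · exact notMem_support_iff.1 fun h => he (hm e h).symm

theorem apply_zero_eq_zero_of_not_X_dvd {n : ℕ} {F : MvPolynomial (Fin 2) R} (hs : s ≠ 0)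
    (hF : IsWeightedHomogeneous ![s, r] F n) (hX : ¬ X 0 ∣ F) {m : Fin 2 →₀ ℕ}
    (hm : m ∈ F.support) (hmax : ∀ e ∈ F.support, e 1 ≤ m 1) : m 0 = 0 := by
  obtain ⟨e, he, he0⟩ : ∃ e ∈ F.support, e 0 = 0 := by
    contrapose! hX
    rw [F.as_sum]
    exact Finset.dvd_sum fun e he => X_dvd_monomial.2 (.inr (hX e he))
  have hwe := hF (mem_support_iff.1 he)
  have hwm := hF (mem_support_iff.1 hm)
  simp only [Finsupp.weight_eq_sum, Fin.sum_univ_two, Matrix.cons_val_zero, Matrix.cons_val_one,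
    smul_eq_mul, he0, zero_mul, zero_add] at hwe hwm
  have hle : e 1 * r ≤ m 1 * r := Nat.mul_le_mul_right r (hmax e he)
  exact (Nat.mul_eq_zero.1 (by omega : m 0 * s = 0)).resolve_right hs

end WeightedHomogeneous

section ProtoTransition

theorem IsQuasihomogeneous.scaled_apply {β : ℝ} {d : ℕ} {f g : ℝ → ℝ → ℝ} {a : ℝ}
    (hg : IsQuasihomogeneous β d g) {l σ : ℝ} (hl : l ≠ 0) {φ : ℝ → ℝ}
    (h : ∀ t, |l| ^ d * g σ (φ t) = f a t) (t : ℝ) : g (|l| * σ) (|l| ^ β * φ t) = f a t := by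
  rw [hg _ _ _ (abs_pos.2 hl), h]

variable {r s d : ℕ} {F G : MvPolynomial (Fin 2) ℝ} {l l₁ l₂ L L₁ L₂ : ℝ} {ψ ψ₁ ψ₂ : ℝ → ℝ}

theorem IsProjectivelyBilipschitz.conj_neg_one_pow (hψ : IsProjectivelyBilipschitz ψ L) (n : ℕ) :
    IsProjectivelyBilipschitz (fun t => (-1) ^ n * ψ ((-1) ^ n * t)) L := by
  rcases neg_one_pow_eq_or ℝ n with h | h
  · simpa [h] using hψ
  · simpa [h] using hψ.comp_neg.neg

theorem natDegree_slice_ne_zero (hs : s ≠ 0)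
    (hG : MvPolynomial.IsWeightedHomogeneous ![s, r] G (s * d))
    (hGX : ∀ c, G ≠ MvPolynomial.C c * MvPolynomial.X 0 ^ d) (hl : l ≠ 0) :
    (slice G l).natDegree ≠ 0 := by
  have hG0 : G ≠ 0 := by simpa using hGX 0
  obtain ⟨m, -, hmax, hm⟩ := exists_leadingCoeff_slice hs hG hG0
  rw [(hm l hl).1]
  intro hm0
  obtain ⟨c, hc⟩ := exists_eq_C_mul_X_pow hs hG fun e he => Nat.le_zero.1 (hm0 ▸ hmax e he)
  exact hGX c hc

theorem exists_isProjectivelyBilipschitz_of_eval2 (hs : s ≠ 0)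
    (hG : MvPolynomial.IsWeightedHomogeneous ![s, r] G (s * d))
    (hGX : ∀ c, G ≠ MvPolynomial.C c * MvPolynomial.X 0 ^ d) (hl : l ≠ 0) (hψ : IsBilipschitz ψ)
    {a : ℝ} (h : ∀ t, eval2 G l (ψ t) = eval2 F a t) :
    ∃ L, (slice G l).leadingCoeff * L ^ (slice G l).natDegree = (slice F a).leadingCoeff ∧
      IsProjectivelyBilipschitz ψ L :=
  exists_isProjectivelyBilipschitz (natDegree_slice_ne_zero hs hG hGX hl) hψ fun t => by
    rw [eval_slice, eval_slice]
    exact h t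

theorem localLipEquiv_of_odd (hsr : s ≤ r) (hs : Odd s)
    (hF : IsQuasihomogeneous (r / s : ℝ) d (eval2 F))
    (hG : IsQuasihomogeneous (r / s : ℝ) d (eval2 G))
    (hGX : ∀ c, G ≠ MvPolynomial.C c * MvPolynomial.X 0 ^ d) (hl : l ≠ 0)
    (hψ : IsBilipschitz ψ) (h : ∀ t, eval2 G l (ψ t) = eval2 F 1 t) :
    LocalLipEquiv (fun z => eval2 F z.1 z.2) (fun z => eval2 G z.1 z.2) := by
  have hs0 : s ≠ 0 := hs.pos.ne'
  have hFw := hF.isWeightedHomogeneous hs0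
  have hGw := hG.isWeightedHomogeneous hs0
  obtain ⟨L, -, hL⟩ := exists_isProjectivelyBilipschitz_of_eval2 hs0 hGw hGX hl hψ h
  refine hF.localLipEquiv hG (continuous_eval2 F) (continuous_eval2 G)
    ((one_le_div (Nat.cast_pos.2 hs.pos)).2 (Nat.cast_le.2 hsr)) hl one_pos hL
    (hL.conj_neg_one_pow r) h fun t => ?_
  calc eval2 G (l * -1) ((-1) ^ r * ψ ((-1) ^ r * t))
      = (-1) ^ (s * d) * eval2 G l (ψ ((-1) ^ r * t)) := by
        rw [← eval2_pow_mul hGw, hs.neg_one_pow, mul_comm l]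
    _ = eval2 F ((-1) ^ s * 1) ((-1) ^ r * ((-1) ^ r * t)) := by rw [h, eval2_pow_mul hFw]
    _ = eval2 F (-1) t := by
        rw [hs.neg_one_pow, mul_one, ← mul_assoc, ← mul_pow, neg_one_mul, neg_neg, one_pow, one_mul]

theorem abs_eq_abs_of_leadingCoeff_slice (hs : s ≠ 0)
    (hF : MvPolynomial.IsWeightedHomogeneous ![s, r] F (s * d))
    (hG : MvPolynomial.IsWeightedHomogeneous ![s, r] G (s * d))
    (hGX : ∀ c, G ≠ MvPolynomial.C c * MvPolynomial.X 0 ^ d) (hl₁ : l₁ ≠ 0) (hl₂ : l₂ ≠ 0)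
    (hcond : |l₁| = |l₂| ∨ ¬ MvPolynomial.X 0 ∣ G)
    (h₁ : (slice G l₁).leadingCoeff * L₁ ^ (slice G l₁).natDegree = (slice F 1).leadingCoeff)
    (h₂ : (slice G l₂).leadingCoeff * L₂ ^ (slice G l₂).natDegree = (slice F (-1)).leadingCoeff) :
    |L₁| = |L₂| := by
  obtain ⟨m, hm, hmax, hlead⟩ := exists_leadingCoeff_slice hs hG (by simpa using hGX 0)
  have hm1 : m 1 ≠ 0 := (hlead l₁ hl₁).1 ▸ natDegree_slice_ne_zero hs hG hGX hl₁
  have habs := abs_leadingCoeff_slice_neg hs hF 1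
  rw [← h₁, ← h₂, (hlead l₁ hl₁).1, (hlead l₂ hl₂).1, (hlead l₁ hl₁).2, (hlead l₂ hl₂).2] at habs
  simp only [abs_mul, abs_pow, mul_assoc] at habs
  have hpow : |l₂| ^ m 0 = |l₁| ^ m 0 := by
    rcases hcond with h | hX
    · rw [h]
    · simp [apply_zero_eq_zero_of_not_X_dvd hs hG hX hm hmax]
  have hcoeff := abs_ne_zero.2 (MvPolynomial.mem_support_iff.1 hm)
  have hl := pow_ne_zero (m 0) (abs_ne_zero.2 hl₁)
  rw [hpow] at habs
  exact ((pow_left_inj₀ (abs_nonneg _) (abs_nonneg _) hm1).1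
    (mul_left_cancel₀ hl (mul_left_cancel₀ hcoeff habs))).symm

theorem localLipEquiv_of_even (hsr : s ≤ r) (hs0 : s ≠ 0) (hs : Even s) (hr : Odd r)
    (hF : IsQuasihomogeneous (r / s : ℝ) d (eval2 F))
    (hG : IsQuasihomogeneous (r / s : ℝ) d (eval2 G))
    (hGX : ∀ c, G ≠ MvPolynomial.C c * MvPolynomial.X 0 ^ d) (hl : 0 < l₁ * l₂)
    (hcond : |l₁| = |l₂| ∨ ¬ MvPolynomial.X 0 ∣ G)
    (hψ₁ : IsBilipschitz ψ₁) (hψ₂ : IsBilipschitz ψ₂)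
    (h₁ : ∀ t, eval2 G l₁ (ψ₁ t) = eval2 F 1 t) (h₂ : ∀ t, eval2 G (-l₂) (ψ₂ t) = eval2 F (-1) t) :
    LocalLipEquiv (fun z => eval2 F z.1 z.2) (fun z => eval2 G z.1 z.2) := by
  have hl₁ : l₁ ≠ 0 := left_ne_zero_of_mul hl.ne'
  have hl₂ : l₂ ≠ 0 := right_ne_zero_of_mul hl.ne'
  have hFw := hF.isWeightedHomogeneous hs0
  have hGw := hG.isWeightedHomogeneous hs0
  obtain ⟨L₁, hlead₁, hL₁⟩ := exists_isProjectivelyBilipschitz_of_eval2 hs0 hGw hGX hl₁ hψ₁ h₁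
  obtain ⟨L₂, hlead₂, hL₂⟩ :=
    exists_isProjectivelyBilipschitz_of_eval2 hs0 hGw hGX (neg_ne_zero.2 hl₂) hψ₂ h₂
  have hρ : l₁ * -(l₂ / l₁) = -l₂ := by rw [mul_neg, mul_div_cancel₀ _ hl₁]
  have hglue {ψ : ℝ → ℝ} (hψ : IsProjectivelyBilipschitz ψ L₁)
      (h : ∀ t, eval2 G (-l₂) (ψ t) = eval2 F (-1) t) :=
    hF.localLipEquiv hG (continuous_eval2 F) (continuous_eval2 G)
      ((one_le_div (by positivity)).2 (Nat.cast_le.2 hsr)) hl₁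
      (div_pos_iff.2 (pos_and_pos_or_neg_and_neg_of_mul_pos (mul_comm l₁ l₂ ▸ hl))) hL₁ hψ h₁
      (hρ ▸ h)
  rcases abs_eq_abs.1 (abs_eq_abs_of_leadingCoeff_slice hs0 hFw hGw hGX hl₁ (neg_ne_zero.2 hl₂)
    (by rwa [abs_neg]) hlead₁ hlead₂) with rfl | rfl
  · exact hglue hL₂ h₂
  · refine hglue hL₂.neg fun t => ?_
    have heven := eval2_pow_mul hGw (-1) (-l₂) (ψ₂ t)
    rw [(hs.mul_right d).neg_one_pow, hs.neg_one_pow, hr.neg_one_pow, one_mul, one_mul,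
      neg_one_mul] at heven
    exact heven.trans (h₂ t)

theorem stmt_19_general (r s d : ℕ) (hsr : s ≤ r) (hs : s ≠ 0) (hgcd : Nat.Coprime r s)
    (F G : MvPolynomial (Fin 2) ℝ) (hF : IsQuasihomogeneous (r / s : ℝ) d (eval2 F))
    (hG : IsQuasihomogeneous (r / s : ℝ) d (eval2 G))
    (hGX : ∀ c, G ≠ MvPolynomial.C c * MvPolynomial.X 0 ^ d) (l1 : ℝ) (hl1 : l1 ≠ 0) (φ1 : ℝ → ℝ)
    (hφ1 : IsBilipschitz φ1)
    (h1 : ∀ t, |l1| ^ d * eval2 G (SignType.sign l1) (φ1 t) = eval2 F 1 t)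
    (hcond : (Even r ∨ Odd s) ∨ ∃ l2 φ2, 0 < l1 * l2 ∧ IsBilipschitz φ2 ∧
      (∀ t, |l2| ^ d * eval2 G (-SignType.sign l2) (φ2 t) = eval2 F (-1) t) ∧
      (l1 = l2 ∨ ¬ MvPolynomial.X 0 ∣ G)) :
    LocalLipEquiv (fun z => eval2 F z.1 z.2) (fun z => eval2 G z.1 z.2) := by
  have hscale {l : ℝ} (hl : l ≠ 0) {φ : ℝ → ℝ} (hφ : IsBilipschitz φ) :
      IsBilipschitz fun t => |l| ^ (r / s : ℝ) * φ t :=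
    (isBilipschitz_const_smul (Real.rpow_pos_of_pos (abs_pos.2 hl) _).ne').comp hφ
  have h1' := hG.scaled_apply hl1 h1
  rw [abs_mul_sign] at h1'
  rcases Nat.even_or_odd s with hs_even | hs_odd
  · have hr : Odd r := Nat.coprime_two_right.1 (hgcd.coprime_dvd_right hs_even.two_dvd)
    obtain ⟨l2, φ2, hl, hφ2, h2, hcond⟩ := hcond.resolve_left fun h =>
      h.elim (Nat.not_even_iff_odd.2 hr) (Nat.not_odd_iff_even.2 hs_even)
    have hl2 := right_ne_zero_of_mul hl.ne'
    have h2' := hG.scaled_apply hl2 h2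
    rw [mul_neg, abs_mul_sign] at h2'
    exact localLipEquiv_of_even hsr hs hs_even hr hF hG hGX hl
      (hcond.imp_left (congrArg abs)) (hscale hl1 hφ1) (hscale hl2 hφ2) h1' h2'
  · exact localLipEquiv_of_odd hsr hs_odd hF hG hGX hl1 (hscale hl1 hφ1) h1'

end ProtoTransition

/-- Sufficient conditions for ℛ-semialgebraic Lipschitz equivalence: if the height
functions of `F` and `G` are related by a proto-transition and (a) `r` is even or `s`
is odd, or (b) `λ₁ = λ₂`, or (c) `X` divides neither `F` nor `G`, then `F` and `G`
are Lipschitz equivalent near the origin. -/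
theorem stmt_19 (r s d : ℕ) (hrs : s < r) (hs : 0 < s) (hgcd : Nat.gcd r s = 1)
    (hd : 1 ≤ d) (β : ℝ) (hβ : β = (r : ℝ) / (s : ℝ))
    (F G : MvPolynomial (Fin 2) ℝ)
    (hF : ∀ t x y : ℝ, 0 < t → eval2 F (t * x) (t ^ β * y) = t ^ d * eval2 F x y)
    (hG : ∀ t x y : ℝ, 0 < t → eval2 G (t * x) (t ^ β * y) = t ^ d * eval2 G x y)
    (hFX : ∀ c : ℝ, F ≠ MvPolynomial.C c * (MvPolynomial.X 0 : MvPolynomial (Fin 2) ℝ) ^ d)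
    (hGX : ∀ c : ℝ, G ≠ MvPolynomial.C c * (MvPolynomial.X 0 : MvPolynomial (Fin 2) ℝ) ^ d)
    (l1 l2 : ℝ) (hl1 : l1 ≠ 0) (hl2 : l2 ≠ 0) (hll : 0 < l1 * l2)
    (φ1 φ2 : ℝ → ℝ)
    (hφ1bij : Function.Bijective φ1) (hφ1lip : ∃ K : NNReal, LipschitzWith K φ1)
    (hφ1inv : ∃ K : NNReal, LipschitzWith K (Function.invFun φ1))
    (hφ2bij : Function.Bijective φ2) (hφ2lip : ∃ K : NNReal, LipschitzWith K φ2)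
    (hφ2inv : ∃ K : NNReal, LipschitzWith K (Function.invFun φ2))
    (hpos : 0 < l1 → 0 < l2 →
      (∀ t : ℝ, |l1| ^ d * eval2 G 1 (φ1 t) = eval2 F 1 t) ∧
      (∀ t : ℝ, |l2| ^ d * eval2 G (-1) (φ2 t) = eval2 F (-1) t))
    (hneg : l1 < 0 → l2 < 0 →
      (∀ t : ℝ, |l1| ^ d * eval2 G (-1) (φ1 t) = eval2 F 1 t) ∧
      (∀ t : ℝ, |l2| ^ d * eval2 G 1 (φ2 t) = eval2 F (-1) t))
    (hcond : (Even r ∨ Odd s) ∨ l1 = l2 ∨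
      (¬ (MvPolynomial.X 0 : MvPolynomial (Fin 2) ℝ) ∣ F ∧
       ¬ (MvPolynomial.X 0 : MvPolynomial (Fin 2) ℝ) ∣ G)) :
    LocalLipEquiv (fun z => eval2 F z.1 z.2) (fun z => eval2 G z.1 z.2) := by
  have ⟨h1, h2⟩ : (∀ t, |l1| ^ d * eval2 G (SignType.sign l1) (φ1 t) = eval2 F 1 t) ∧
      ∀ t, |l2| ^ d * eval2 G (-SignType.sign l2) (φ2 t) = eval2 F (-1) t := by
    rcases pos_and_pos_or_neg_and_neg_of_mul_pos hll with ⟨h1, h2⟩ | ⟨h1, h2⟩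
    · simpa [h1, h2] using hpos h1 h2
    · simpa [h1, h2] using hneg h1 h2
  subst hβ
  exact stmt_19_general r s d hrs.le hs.ne' hgcd F G hF hG hGX l1 hl1 φ1
    (isBilipschitz_of_bijective hφ1bij hφ1lip hφ1inv) h1 <| hcond.imp_right fun h =>
      ⟨l2, φ2, hll, isBilipschitz_of_bijective hφ2bij hφ2lip hφ2inv, h2,
        h.imp_right And.right⟩
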